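/- Let G be a group such that every subgroup of G of finite index has finite abelianization. Let M be a group and ρ : G → M a group homomorphism whose range is virtually abelian, i.e. there exists a commutative subgroup A of the range of ρ with finite index in the range. Then the range of ρ is finite. -/

import Mathlib

/-- If every finite-index subgroup of `G` has finite abelianization, and `ρ : G →* M`
has virtually abelian range (there is a commutative subgroup of the range of finite
index in the range), then the range of `ρ` is finite. -/
theorem stmt_1 {G M : Type*} [Group G] [Group M]
    (hG : ∀ H : Subgroup G, H.index ≠ 0 → Finite (Abelianization H))
    (ρ : G →* M) (A : Subgroup ρ.range)
    (hA : ∀ x ∈ A, ∀ y ∈ A, x * y = y * x)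
    (hidx : A.index ≠ 0) :
    Finite ρ.range := by
  have hsurj : Function.Surjective ρ.rangeRestrict := ρ.rangeRestrict_surjective
  have hH : (A.comap ρ.rangeRestrict).index ≠ 0 := by
    rw [Subgroup.index_comap_of_surjective A hsurj]
    exact hidx
  have hfin := hG _ hH
  letI : CommGroup A :=
    { (inferInstance : Group A) with
      mul_comm := fun x y => Subtype.ext (hA x x.2 y y.2) }
  let f : A.comap ρ.rangeRestrict →* A := ρ.rangeRestrict.subgroupComap A
  have hf : Function.Surjective (Abelianization.lift f) := by
    rintro ⟨a, ha⟩
    obtain ⟨g, rfl⟩ := hsurj a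
    exact ⟨Abelianization.of ⟨g, ha⟩, rfl⟩
  have hAfin : Finite A := Finite.of_surjective _ hf
  apply Nat.finite_of_card_ne_zero
  rw [← A.card_mul_index]
  exact mul_ne_zero Nat.card_pos.ne' hidx
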